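/- arXiv:1503.04717 — 2 statements merged into one kernel-verified Lean document; each statement's English description precedes it below -/
import Mathlib

section
/- Let n ≥ 1 be an integer, let P ⊆ [0,1]^n be a nonempty compact convex down-monotone set such that for each coordinate i ∈ {1,…,n} there exists x ∈ P with x_i = 1. Let 0 < ε ≤ 1/2 and set γ = ε/(1−ε). Let S = {0} ∪ {⌊(1 + γ/2)^ℓ⌋ : ℓ = 0, 1, …, ⌊log_{1+γ/2}(5n/γ)⌋}, and let Q = {x ∈ ℝ^n : 0 ≤ x ≤ 1, and c̃·x ≤ max{c̃·y : y ∈ P} for every c̃ ∈ ℝ^n with c̃_i ∈ S for all i}. Then Q is an ε-approximated formulation of P: P ⊆ Q and for every c ∈ ℝ^n, max{c·x : x ∈ P} ≥ (1−ε)·max{c·x : x ∈ Q}. -/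
noncomputable section

/-- Dot product on `ℝ^n`. -/
def dot {n : ℕ} (c x : Fin n → ℝ) : ℝ := ∑ i, c i * x i

/-- The coefficient set `S = {0} ∪ {⌊(1 + γ/2)^ℓ⌋ : ℓ = 0, 1, …, ⌊log_{1+γ/2}(5n/γ)⌋}`. -/
def coefSet (n : ℕ) (γ : ℝ) : Set ℝ :=
  insert 0 {v : ℝ | ∃ ℓ : ℕ, ℓ ≤ ⌊Real.logb (1 + γ / 2) (5 * n / γ)⌋₊ ∧
    v = ((⌊(1 + γ / 2) ^ ℓ⌋ : ℤ) : ℝ)}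

/-- The polytope `Q` cut out by the box `[0,1]^n` and all inequalities
`c̃·x ≤ max {c̃·y : y ∈ P}` whose coefficients lie in `coefSet n γ`. -/
def approxQ (n : ℕ) (γ : ℝ) (P : Set (Fin n → ℝ)) : Set (Fin n → ℝ) :=
  {x | (∀ i, 0 ≤ x i ∧ x i ≤ 1) ∧
    ∀ ct : Fin n → ℝ, (∀ i, ct i ∈ coefSet n γ) →
      dot ct x ≤ sSup ((fun y => dot ct y) '' P)}

/-!
Replacing the negative entries of `c` by `0` does not change its supremum `M` over the down-monotone
set `P` and can only increase `c ⬝ᵥ x` for `x ≥ 0`, so assume `c ≥ 0`. As `P` touches every facet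
`x i = 1`, each `c i` lies in `[0, M]`. Rescale so that `M` becomes the largest power of
`q = 1 + γ / 2` not exceeding `5 * n / γ`, and round each entry down to `⌊q ^ l⌋` for the nearest
power `q ^ l` below it, or to `0`. The rounded objective is at most `M` on `P`, hence on the
relaxation; undoing the rounding costs a factor `q` and an additive term at most `γ / 2 * M`, so
`c ⬝ᵥ x ≤ (1 + γ) * M`.
-/

section DownMonotone

variable {ι R : Type*}

/-- A set in the nonnegative orthant of `ι → R` is down-monotone if it is closed under decreasing
coordinates without leaving the orthant. Containment in the orthant is not part of the definition
and is assumed separately. -/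
def IsDownMonotone [Zero R] [Preorder R] (P : Set (ι → R)) : Prop :=
  ∀ x ∈ P, Set.Icc 0 x ⊆ P

variable [Fintype ι] {P : Set (ι → R)} {c : ι → R} {M : R}

lemma IsDownMonotone.posPart_dotProduct_le [Ring R] [LinearOrder R]
    (hdm : IsDownMonotone P) (hP : P ⊆ Set.Ici 0) (hM : ∀ y ∈ P, c ⬝ᵥ y ≤ M) {y : ι → R}
    (hy : y ∈ P) : c⁺ ⬝ᵥ y ≤ M := by
  classical
  have hmem : Set.indicator {i | 0 ≤ c i} y ∈ P :=
    hdm y hy ⟨Set.indicator_nonneg fun i _ ↦ hP hy i, Set.indicator_le_self' fun i _ ↦ hP hy i⟩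
  refine (Finset.sum_congr rfl fun i _ ↦ ?_).trans_le (hM _ hmem)
  rcases le_or_gt 0 (c i) with h | h
  · simp [Pi.posPart_apply, h]
  · simp [Pi.posPart_apply, h.le, h.not_ge]

lemma apply_le_of_forall_dotProduct_le [Semiring R] [PartialOrder R] [IsOrderedRing R]
    (hc : 0 ≤ c) (hP : P ⊆ Set.Ici 0) (hM : ∀ y ∈ P, c ⬝ᵥ y ≤ M) {i : ι}
    (hi : ∃ y ∈ P, y i = 1) : c i ≤ M := by
  obtain ⟨y, hy, hyi⟩ := hi
  calc c i = c i * y i := by rw [hyi, mul_one]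
    _ ≤ c ⬝ᵥ y := Finset.single_le_sum (f := fun j ↦ c j * y j)
        (fun j _ ↦ mul_nonneg (hc j) (hP hy j)) (Finset.mem_univ i)
    _ ≤ M := hM y hy

lemma dotProduct_le_of_rounding [Field R] [LinearOrder R] [IsStrictOrderedRing R] {S : Set R}
    {x : ι → R} {q s : R} (hP : P ⊆ Set.Ici 0) (hM : ∀ y ∈ P, c ⬝ᵥ y ≤ M) (hx : x ∈ Set.Icc 0 1)
    (hvalid : ∀ d : ι → R, (∀ i, d i ∈ S) → ∀ B, (∀ y ∈ P, d ⬝ᵥ y ≤ B) → d ⬝ᵥ x ≤ B)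
    (hq : 0 ≤ q) (hs : 0 < s) (hround : ∀ i, ∃ v ∈ S, s * v ≤ c i ∧ c i ≤ q * (s * (v + 1))) :
    c ⬝ᵥ x ≤ q * (M + s * Fintype.card ι) := by
  choose d hdS hdc hcd using hround
  have hd : s * (d ⬝ᵥ x) ≤ M := by
    refine (le_div_iff₀' hs).1 (hvalid d hdS _ fun y hy ↦ (le_div_iff₀' hs).2 ?_)
    calc s * (d ⬝ᵥ y) = (s • d) ⬝ᵥ y := (smul_dotProduct s d y).symm
      _ ≤ c ⬝ᵥ y := dotProduct_le_dotProduct_of_nonneg_right hdc (hP hy)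
      _ ≤ M := hM y hy
  have hsum : 1 ⬝ᵥ x ≤ Fintype.card ι := by
    simpa [one_dotProduct] using Finset.sum_le_card_nsmul Finset.univ x 1 fun i _ ↦ hx.2 i
  calc c ⬝ᵥ x ≤ (q • s • (d + 1)) ⬝ᵥ x := dotProduct_le_dotProduct_of_nonneg_right hcd hx.1
    _ = q * (s * (d ⬝ᵥ x) + s * (1 ⬝ᵥ x)) := by
      simp only [smul_dotProduct, add_dotProduct, smul_eq_mul, mul_add]
    _ ≤ q * (M + s * Fintype.card ι) := by gcongr

end DownMonotone

lemma bddAbove_image_dotProduct {ι : Type*} [Fintype ι] {P : Set (ι → ℝ)}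
    (hP : Bornology.IsBounded P) (c : ι → ℝ) : BddAbove ((fun x ↦ c ⬝ᵥ x) '' P) :=
  (hP.isCompact_closure.image (by fun_prop)).bddAbove.mono (Set.image_mono subset_closure)

section Rounding

variable {n : ℕ} {γ : ℝ}

lemma exists_le_floor_logb_and_mul_le_pow (hn : 1 ≤ n) (hγ₀ : 0 < γ) (hγ₁ : γ ≤ 1) :
    ∃ L : ℕ, L ≤ ⌊Real.logb (1 + γ / 2) (5 * n / γ)⌋₊ ∧
      (1 + γ / 2) * n ≤ γ / 2 * (1 + γ / 2) ^ L := by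
  have hn' : (1 : ℝ) ≤ n := by exact_mod_cast hn
  have hone : 1 ≤ 5 * (n : ℝ) / γ := by rw [le_div_iff₀ hγ₀]; linarith
  obtain ⟨L, hle, hlt⟩ := exists_nat_pow_near hone (show 1 < 1 + γ / 2 by linarith)
  refine ⟨L, Nat.le_floor ?_, ?_⟩
  · rwa [Real.le_logb_iff_rpow_le (by linarith) (by linarith), Real.rpow_natCast]
  · -- The constant `5` in `coefSet` is chosen so that this bound suffices.
    have hsq : (1 + γ / 2) * (1 + γ / 2) ≤ 5 / 2 := by nlinarith
    rw [div_lt_iff₀ hγ₀, pow_succ] at hlt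
    refine le_of_mul_le_mul_left ?_ (show 0 < 1 + γ / 2 by linarith)
    calc (1 + γ / 2) * ((1 + γ / 2) * n) = (1 + γ / 2) * (1 + γ / 2) * n := by ring
      _ ≤ 5 / 2 * n := by gcongr
      _ ≤ (1 + γ / 2) * (γ / 2 * (1 + γ / 2) ^ L) := by linarith

lemma exists_mem_coefSet_near (hγ : 0 < γ) {L : ℕ}
    (hL : L ≤ ⌊Real.logb (1 + γ / 2) (5 * n / γ)⌋₊) {a : ℝ} (ha₀ : 0 ≤ a)
    (haL : a ≤ (1 + γ / 2) ^ L) :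
    ∃ v ∈ coefSet n γ, v ≤ a ∧ a ≤ (1 + γ / 2) * (v + 1) := by
  have hq : 1 < 1 + γ / 2 := by linarith
  rcases lt_or_ge a 1 with ha₁ | ha₁
  · exact ⟨0, Set.mem_insert _ _, ha₀, by linarith⟩
  · obtain ⟨l, hle, hlt⟩ := exists_nat_pow_near ha₁ hq
    have hlL : l ≤ L := (pow_le_pow_iff_right₀ hq).1 (hle.trans haL)
    refine ⟨_, Set.mem_insert_of_mem _ ⟨l, hlL.trans hL, rfl⟩, (Int.floor_le _).trans hle, ?_⟩
    calc a ≤ (1 + γ / 2) * (1 + γ / 2) ^ l := (hlt.trans_eq (pow_succ' _ _)).le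
      _ ≤ (1 + γ / 2) * (⌊(1 + γ / 2) ^ l⌋ + 1) := by gcongr; exact (Int.lt_floor_add_one _).le

lemma exists_scale_coefSet_near (hn : 1 ≤ n) (hγ₀ : 0 < γ) (hγ₁ : γ ≤ 1) {M : ℝ} (hM : 0 < M) :
    ∃ s > 0, (1 + γ / 2) * (s * n) ≤ γ / 2 * M ∧ ∀ a, 0 ≤ a → a ≤ M →
      ∃ v ∈ coefSet n γ, s * v ≤ a ∧ a ≤ (1 + γ / 2) * (s * (v + 1)) := by
  obtain ⟨L, hL, hnL⟩ := exists_le_floor_logb_and_mul_le_pow hn hγ₀ hγ₁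
  have hs : 0 < M / (1 + γ / 2) ^ L := by positivity
  have hsM : M / (1 + γ / 2) ^ L * (1 + γ / 2) ^ L = M := div_mul_cancel₀ _ (by positivity)
  generalize M / (1 + γ / 2) ^ L = s at hs hsM
  refine ⟨s, hs, ?_, fun a ha₀ haM ↦ ?_⟩
  · calc (1 + γ / 2) * (s * n) = s * ((1 + γ / 2) * n) := by ring
      _ ≤ s * (γ / 2 * (1 + γ / 2) ^ L) := by gcongr
      _ = γ / 2 * M := by rw [← hsM]; ring
  · obtain ⟨v, hv, hva, hav⟩ := exists_mem_coefSet_near hγ₀ hL (div_nonneg ha₀ hs.le)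
      ((div_le_iff₀' hs).2 (haM.trans_eq hsM.symm))
    refine ⟨v, hv, (le_div_iff₀' hs).1 hva, ?_⟩
    rw [mul_left_comm]
    exact (div_le_iff₀' hs).1 hav

end Rounding

section Relaxation

variable {n : ℕ} {γ M : ℝ} {P : Set (Fin n → ℝ)} {c x : Fin n → ℝ}

lemma bddAbove_image_dot (hP : P ⊆ Set.Icc 0 1) (c : Fin n → ℝ) :
    BddAbove ((fun x ↦ dot c x) '' P) :=
  bddAbove_image_dotProduct ((Metric.isBounded_Icc 0 1).subset hP) c

lemma subset_approxQ (hP : P ⊆ Set.Icc 0 1) (γ : ℝ) : P ⊆ approxQ n γ P := fun _ hx ↦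
  ⟨forall_and.2 (hP hx), fun d _ ↦ le_csSup (bddAbove_image_dot hP d) (Set.mem_image_of_mem _ hx)⟩

lemma dotProduct_le_of_mem_approxQ (hx : x ∈ approxQ n γ P) (hPne : P.Nonempty)
    (hP : P ⊆ Set.Ici 0) (hfull : ∀ i, ∃ y ∈ P, y i = 1) (hγ₀ : 0 < γ) (hγ₁ : γ ≤ 1) (hc : 0 ≤ c)
    (hM : ∀ y ∈ P, c ⬝ᵥ y ≤ M) : c ⬝ᵥ x ≤ (1 + γ) * M := by
  obtain rfl | hc_ne := eq_or_ne c 0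
  · obtain ⟨y, hy⟩ := hPne
    have hM₀ : 0 ≤ M := by simpa using hM y hy
    rw [zero_dotProduct]
    positivity
  have hcM : ∀ i, c i ≤ M := fun i ↦ apply_le_of_forall_dotProduct_le hc hP hM (hfull i)
  obtain ⟨i, hi⟩ := Function.ne_iff.1 hc_ne
  have hM₀ : 0 < M := ((hc i).lt_of_ne' hi).trans_le (hcM i)
  obtain ⟨s, hs, hsM, hround⟩ := exists_scale_coefSet_near i.pos hγ₀ hγ₁ hM₀
  have hvalid : ∀ d : Fin n → ℝ, (∀ i, d i ∈ coefSet n γ) →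
      ∀ B, (∀ y ∈ P, d ⬝ᵥ y ≤ B) → d ⬝ᵥ x ≤ B := fun d hd B hB ↦
    (hx.2 d hd).trans (csSup_le (hPne.image _) (Set.forall_mem_image.2 hB))
  calc c ⬝ᵥ x ≤ (1 + γ / 2) * (M + s * Fintype.card (Fin n)) :=
        dotProduct_le_of_rounding hP hM (forall_and.1 hx.1) hvalid (by positivity) hs
          fun i ↦ hround (c i) (hc i) (hcM i)
    _ ≤ (1 + γ) * M := by rw [Fintype.card_fin]; linarith

lemma IsDownMonotone.dot_le_of_mem_approxQ (hdm : IsDownMonotone P) (hPne : P.Nonempty)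
    (hP : P ⊆ Set.Ici 0) (hfull : ∀ i, ∃ y ∈ P, y i = 1) (hγ₀ : 0 < γ) (hγ₁ : γ ≤ 1)
    (hM : ∀ y ∈ P, dot c y ≤ M) (hx : x ∈ approxQ n γ P) : dot c x ≤ (1 + γ) * M :=
  calc c ⬝ᵥ x ≤ c⁺ ⬝ᵥ x :=
        dotProduct_le_dotProduct_of_nonneg_right (le_posPart c) fun i ↦ (hx.1 i).1
    _ ≤ (1 + γ) * M := dotProduct_le_of_mem_approxQ hx hPne hP hfull hγ₀ hγ₁ (posPart_nonneg c)
        fun _ ↦ hdm.posPart_dotProduct_le hP hM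

end Relaxation

theorem down_monotone_approx_formulation_general {n : ℕ} {P : Set (Fin n → ℝ)}
    (hPne : P.Nonempty) (hP : P ⊆ Set.Icc 0 1) (hdm : IsDownMonotone P)
    (hfull : ∀ i, ∃ x ∈ P, x i = 1) {ε : ℝ} (hε₀ : 0 < ε) (hε₁ : ε ≤ 1 / 2) :
    P ⊆ approxQ n (ε / (1 - ε)) P ∧
    ∀ c : Fin n → ℝ,
      (1 - ε) * sSup ((fun x ↦ dot c x) '' approxQ n (ε / (1 - ε)) P)
        ≤ sSup ((fun x ↦ dot c x) '' P) := by
  have hsub : P ⊆ approxQ n (ε / (1 - ε)) P := subset_approxQ hP _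
  refine ⟨hsub, fun c ↦ ?_⟩
  have hpos : 0 < 1 - ε := by linarith
  have hγ₁ : ε / (1 - ε) ≤ 1 := by rw [div_le_one hpos]; linarith
  have hfactor : 1 + ε / (1 - ε) = (1 - ε)⁻¹ := by field_simp; ring
  rw [← le_inv_mul_iff₀ hpos, ← hfactor]
  refine csSup_le ((hPne.mono hsub).image _) (Set.forall_mem_image.2 fun x hx ↦ ?_)
  exact hdm.dot_le_of_mem_approxQ hPne (hP.trans Set.Icc_subset_Ici_self) hfull
    (div_pos hε₀ hpos) hγ₁
    (fun y hy ↦ le_csSup (bddAbove_image_dot hP c) (Set.mem_image_of_mem _ hy)) hx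

/-- let `P ⊆ [0,1]^n` be a nonempty compact convex down-monotone set touching
every facet `x_i = 1`, let `0 < ε ≤ 1/2` and `γ = ε/(1−ε)`. Then the polytope `Q` defined by
the box constraints together with all valid inequalities with coefficients in
`S = {0} ∪ {⌊(1+γ/2)^ℓ⌋ : 0 ≤ ℓ ≤ ⌊log_{1+γ/2}(5n/γ)⌋}` is an `ε`-approximated formulation
of `P`: `P ⊆ Q` and `max {c·x : x ∈ P} ≥ (1−ε)·max {c·x : x ∈ Q}` for every `c`. -/
theorem down_monotone_approx_formulation (n : ℕ) (hn : 1 ≤ n)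
    (P : Set (Fin n → ℝ)) (hPne : P.Nonempty) (hPc : IsCompact P) (hPconv : Convex ℝ P)
    (hPbox : ∀ x ∈ P, ∀ i, 0 ≤ x i ∧ x i ≤ 1)
    (hdm : ∀ x ∈ P, ∀ y : Fin n → ℝ, (∀ i, 0 ≤ y i ∧ y i ≤ x i) → y ∈ P)
    (hfull : ∀ i, ∃ x ∈ P, x i = 1)
    (ε : ℝ) (hε0 : 0 < ε) (hε1 : ε ≤ 1 / 2) :
    P ⊆ approxQ n (ε / (1 - ε)) P ∧
    ∀ c : Fin n → ℝ,
      (1 - ε) * sSup ((fun x => dot c x) '' approxQ n (ε / (1 - ε)) P)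
        ≤ sSup ((fun x => dot c x) '' P) :=
  down_monotone_approx_formulation_general hPne (fun x hx ↦ forall_and.1 (hPbox x hx))
    (fun x hx y hy ↦ hdm x hx y (forall_and.2 hy)) hfull hε0 hε1
end
end

section
/- Let n ≥ 1 be an integer, let 0 < γ ≤ 1, let c ∈ ℝ^n be a nonzero vector with c ≥ 0, and let β be a real number with β ≥ ‖c‖_∞. Set K = ‖c‖_∞·γ/(5n), let G = {i : c_i < K}, define c̃ ∈ ℝ^n by c̃_i = 0 for i ∈ G and c̃_i = ⌊(1 + γ/2)^{⌊log_{1+γ/2}(c_i/K)⌋}⌋ for i ∉ G, and set β̃ = β/K. Then max{c·x : x ∈ [0,1]^n, c̃·x ≤ β̃} ≤ (1 + γ)·β. -/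
noncomputable section

/-- The threshold `K = ‖c‖_∞ · γ / (5n)` (the norm on `Fin n → ℝ` is the sup norm). -/
def Kthr (n : ℕ) (γ : ℝ) (c : Fin n → ℝ) : ℝ := ‖c‖ * γ / (5 * n)

/-- The rounded objective `c̃`: `c̃_i = 0` when `c_i < K`, and otherwise
`c̃_i = ⌊(1 + γ/2)^{⌊log_{1+γ/2}(c_i/K)⌋}⌋`. -/
def ctil (n : ℕ) (γ : ℝ) (c : Fin n → ℝ) : Fin n → ℝ :=
  fun i => if c i < Kthr n γ c then 0
    else ((⌊(1 + γ / 2) ^ (⌊Real.logb (1 + γ / 2) (c i / Kthr n γ c)⌋ : ℤ)⌋ : ℤ) : ℝ)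

/-!
The floor of the logarithm costs a factor `1 + γ/2` and the outer floor costs at most `1`, so
`c i ≤ (1 + γ/2) K (c̃ i + 1)` at every index; entries below `K` satisfy this trivially. Pairing
with `x ∈ [0,1]^n` gives `c·x ≤ (1 + γ/2) (K (c̃·x) + n K)`, where `K (c̃·x) ≤ β` and
`n K = ‖c‖ γ/5 ≤ β γ/5`. It remains that `(1 + γ/2) (1 + γ/5) ≤ 1 + γ`, which holds for
`0 ≤ γ ≤ 3`.
-/

theorem lt_zpow_floor_logb_add_one {b y : ℝ} (hb : 1 < b) (hy : 0 < y) :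
    y < b ^ (⌊Real.logb b y⌋ + 1) := by
  rw [← Real.rpow_intCast, ← Real.logb_lt_iff_lt_rpow hb hy, Int.cast_add, Int.cast_one]
  exact Int.lt_floor_add_one _

theorem lt_mul_floor_zpow_floor_logb_add_one {b y : ℝ} (hb : 1 < b) (hy : 0 < y) :
    y < b * (⌊b ^ ⌊Real.logb b y⌋⌋ + 1) := by
  have hb0 : 0 < b := zero_lt_one.trans hb
  calc y < b ^ (⌊Real.logb b y⌋ + 1) := lt_zpow_floor_logb_add_one hb hy
    _ = b * b ^ ⌊Real.logb b y⌋ := by rw [zpow_add_one₀ hb0.ne', mul_comm]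
    _ ≤ b * (⌊b ^ ⌊Real.logb b y⌋⌋ + 1) := by
      gcongr
      exact (Int.lt_floor_add_one _).le

theorem dot_le_mul_dot_add {n : ℕ} {c c' x : Fin n → ℝ} {a d : ℝ} (hd : 0 ≤ d)
    (hcc' : ∀ i, c i ≤ a * c' i + d) (hx : ∀ i, 0 ≤ x i ∧ x i ≤ 1) :
    dot c x ≤ a * dot c' x + n * d := by
  have hterm (i : Fin n) : c i * x i ≤ a * (c' i * x i) + d :=
    calc c i * x i ≤ (a * c' i + d) * x i := mul_le_mul_of_nonneg_right (hcc' i) (hx i).1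
      _ = a * (c' i * x i) + d * x i := by ring
      _ ≤ a * (c' i * x i) + d := by
        gcongr
        exact mul_le_of_le_one_right hd (hx i).2
  calc dot c x ≤ ∑ i, (a * (c' i * x i) + d) := Finset.sum_le_sum fun i _ => hterm i
    _ = a * dot c' x + n * d := by
      simp only [dot, Finset.sum_add_distrib, Finset.mul_sum, Finset.sum_const,
        Finset.card_univ, Fintype.card_fin, nsmul_eq_mul]

theorem Kthr_pos {n : ℕ} {γ : ℝ} {c : Fin n → ℝ} (hγ : 0 < γ) (hc : c ≠ 0) :
    0 < Kthr n γ c := by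
  obtain ⟨i, -⟩ := Function.ne_iff.mp hc
  have hn : 0 < n := i.pos
  exact div_pos (mul_pos (norm_pos_iff.mpr hc) hγ) (by positivity)

theorem natCast_mul_Kthr (n : ℕ) (γ : ℝ) (c : Fin n → ℝ) :
    n * Kthr n γ c = ‖c‖ * γ / 5 := by
  obtain rfl | hn := eq_or_ne n 0
  · rw [norm_of_subsingleton c, Nat.cast_zero, zero_mul, zero_mul, zero_div]
  · unfold Kthr
    field_simp

theorem le_mul_ctil_add {n : ℕ} {γ : ℝ} {c : Fin n → ℝ} (hγ : 0 < γ) (hc : c ≠ 0)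
    (i : Fin n) :
    c i ≤ (1 + γ / 2) * Kthr n γ c * ctil n γ c i + (1 + γ / 2) * Kthr n γ c := by
  have hb : 1 < 1 + γ / 2 := by linarith
  have hK : 0 < Kthr n γ c := Kthr_pos hγ hc
  unfold ctil
  split_ifs with hsmall
  · rw [mul_zero, zero_add]
    exact hsmall.le.trans (le_mul_of_one_le_left hK.le hb.le)
  · have hquot : 0 < c i / Kthr n γ c := div_pos (hK.trans_le (not_lt.mp hsmall)) hK
    have hround := lt_mul_floor_zpow_floor_logb_add_one hb hquot
    rw [div_lt_iff₀ hK] at hround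
    linarith

theorem rounded_objective_approximation_general {n : ℕ} {γ : ℝ} (hγ0 : 0 < γ) (hγ3 : γ ≤ 3)
    {c : Fin n → ℝ} (hc : c ≠ 0) {β : ℝ} (hβ : ‖c‖ ≤ β) {x : Fin n → ℝ}
    (hx : ∀ i, 0 ≤ x i ∧ x i ≤ 1) (hdot : dot (ctil n γ c) x ≤ β / Kthr n γ c) :
    dot c x ≤ (1 + γ) * β := by
  have hK : 0 < Kthr n γ c := Kthr_pos hγ0 hc
  have hβ0 : 0 ≤ β := (norm_nonneg c).trans hβ
  have hrounded : dot (ctil n γ c) x * Kthr n γ c ≤ β := (le_div_iff₀ hK).mp hdot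
  have hloss : n * Kthr n γ c ≤ β * γ / 5 := by
    rw [natCast_mul_Kthr]
    gcongr
  have hfactor : (1 + γ / 2) * (1 + γ / 5) ≤ 1 + γ := by nlinarith
  calc dot c x
      ≤ (1 + γ / 2) * Kthr n γ c * dot (ctil n γ c) x + n * ((1 + γ / 2) * Kthr n γ c) :=
        dot_le_mul_dot_add (by positivity) (le_mul_ctil_add hγ0 hc) hx
    _ = (1 + γ / 2) * (dot (ctil n γ c) x * Kthr n γ c + n * Kthr n γ c) := by ring
    _ ≤ (1 + γ / 2) * (β + β * γ / 5) := by gcongr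
    _ = (1 + γ / 2) * (1 + γ / 5) * β := by ring
    _ ≤ (1 + γ) * β := by gcongr

/-- for `n ≥ 1`, `0 < γ ≤ 1`, a nonzero `c ≥ 0` and `β ≥ ‖c‖_∞`, with
`K = ‖c‖_∞·γ/(5n)`, `c̃` the rounded objective, and `β̃ = β/K`, one has
`max {c·x : x ∈ [0,1]^n, c̃·x ≤ β̃} ≤ (1 + γ)·β`. -/
theorem rounded_objective_approximation (n : ℕ) (hn : 1 ≤ n)
    (γ : ℝ) (hγ0 : 0 < γ) (hγ1 : γ ≤ 1)
    (c : Fin n → ℝ) (hc0 : ∀ i, 0 ≤ c i) (hcne : c ≠ 0)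
    (β : ℝ) (hβ : ‖c‖ ≤ β) :
    ∀ x : Fin n → ℝ, (∀ i, 0 ≤ x i ∧ x i ≤ 1) →
      dot (ctil n γ c) x ≤ β / Kthr n γ c →
      dot c x ≤ (1 + γ) * β :=
  fun _ hx hdot =>
    rounded_objective_approximation_general hγ0 (hγ1.trans (by norm_num)) hcne hβ hx hdot
end
end
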